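/- arXiv:1811.00248 — 2 statements merged into one kernel-verified Lean document; each statement's English description precedes it below -/
import Mathlib

section
/- For every natural number n: H_{7n}(G(x,7)) = (2n+1)^3, H_{7n+1}(G(x,7)) = (2n+1)^3, H_{7n+2}(G(x,7)) = (1/90)·(n+1)(9604n^3+9604n^2−1323n−2340)(2n+1)^2, H_{7n+3}(G(x,7)) = −(1/45)·(19208n^3+67228n^2+70854n+23445)(n+1)^2(2n+1), H_{7n+4}(G(x,7)) = 64(n+1)^3, H_{7n+5}(G(x,7)) = (1/45)·(n+1)^2(38416n^4+153664n^3+208936n^2+103344n+9045), and H_{7n+6}(G(x,7)) = −(1/90)·(9604n^3+48020n^2+75509n+38110)(2n+3)^2(n+1). -/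
/-! Put `w = z + 2 + 1/z = (1+z)²/z`. Then `binom(2k+7, k)` is the constant term of `w^k (1+z)^7`,
so the Hankel determinant is the Gram determinant of `1, w, w², …` for the form
`⟨f, g⟩ = CT (f g (1+z)^7)`. The Laurent polynomials `pᵢ = (z^(-i) + z^(i+1)) / (1+z)` are monic
of degree `i` in `w`, so `1, w, w², …` may be replaced by them without changing the determinant
(`hankel_eq_det_bandMatrix`). Their Gram matrix `bandEntry` is a Toeplitz band of half-width 6
plus a Hankel corner.

The corner acts as a reflection: a sequence on `ℕ`, extended to `ℤ` symmetrically under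
`j ↦ -1 - j`, is annihilated by all rows as soon as it is annihilated by `(1 + E)^5 (1 + E^7)`,
`E` being the shift. These sequences form a six-dimensional space, spanned by
`(-1)^j (2j+1)^e` for `e = 1, 3, 5` and by `(-1)^j` times three sequences of period 7
(`solSeq`, `bandEntry_sum`). As the outermost band entries are `1`, the determinant of the
`n × n` section is the quotient of the `6 × 6` Casorati determinants of these sequences at `n` and
at `0` (`det_bandMatrix_mul`). For `n = 7m + s` the periodic columns are constant and the others
polynomial in `m`, so that each Casorati determinant is an explicit polynomial in `m`. -/

/-- The Hankel determinant `H_n(a)` of a sequence `a : ℕ → ℤ`: the determinant of the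
`n × n` matrix whose `(i,j)` entry is `a (i + j)`.  `H_0 = 1` by convention (empty matrix). -/
def hankel (a : ℕ → ℤ) (n : ℕ) : ℤ :=
  Matrix.det (Matrix.of fun i j : Fin n => a (i.val + j.val))

/-- The sequence `a_k = binom(2k+r, k)`, whose generating function is
`G(x,r) = C(x)^r / √(1-4x)`. -/
def centralSeq (r : ℕ) (k : ℕ) : ℤ :=
  ((2 * k + r).choose k : ℤ)

/-! ### Reduction of the Hankel matrix to a band matrix -/

open Polynomial in
/-- The change of basis: with `w = (1+X)²/X` and `pᵢ = (X^(-i) + X^(i+1)) / (1+X)`, this is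
`w ^ k = ∑ᵢ binom(2k+1, k-i) pᵢ`, multiplied by `X ^ k * (1 + X)`. -/
lemma one_add_X_pow_odd (k : ℕ) :
    (1 + X : ℤ[X]) ^ (2 * k + 1) =
      ∑ i ∈ Finset.range (k + 1),
        C ((2 * k + 1).choose (k - i) : ℤ) * (X ^ (k - i) + X ^ (k + i + 1)) := by
  rw [add_comm, add_pow, show 2 * k + 1 + 1 = (k + 1) + (k + 1) by ring, Finset.sum_range_add,
    ← Finset.sum_range_reflect, ← Finset.sum_add_distrib]
  refine Finset.sum_congr rfl fun i hi => ?_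
  have hi' : i ≤ k := by simpa [Nat.lt_succ_iff] using hi
  have h1 : k + 1 - 1 - i = k - i := by omega
  have h2 : (2 * k + 1).choose (k + 1 + i) = (2 * k + 1).choose (k - i) := by
    rw [← Nat.choose_symm (show k + 1 + i ≤ 2 * k + 1 by omega)]
    congr 1; omega
  rw [h1, h2, show k + 1 + i = k + i + 1 by ring]
  simp
  ring

/-- The coefficients of the powers of `w` in the basis `pᵢ`; a unit lower triangular matrix. -/
def lowerCoeff (k i : ℕ) : ℤ := if i ≤ k then ((2 * k + 1).choose (k - i) : ℤ) else 0

/-- The Gram matrix of the basis `pᵢ`: `bandEntry i j` is the constant term of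
`(X^(-i) + X^(i+1)) (X^(-j) + X^(j+1)) (1+X)^5`. The fourth binomial `binom(5, -i-j-2)` of this
constant term vanishes, and the two conditionals stand for binomials whose lower index may be
negative. -/
def bandEntry (i j : ℕ) : ℤ :=
  (Nat.choose 5 (i + j) : ℤ) + (if j < i then (Nat.choose 5 (i - j - 1) : ℤ) else 0) +
    (if i < j then (Nat.choose 5 (j - i - 1) : ℤ) else 0)

open Polynomial in
lemma one_add_X_pow_odd_range {k n : ℕ} (hk : k < n) :
    (1 + X : ℤ[X]) ^ (2 * k + 1) =
      ∑ i ∈ Finset.range n, C (lowerCoeff k i) * (X ^ (k - i) + X ^ (k + i + 1)) := by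
  rw [one_add_X_pow_odd]
  symm
  rw [← Finset.sum_subset (Finset.range_subset_range.2 (show k + 1 ≤ n from hk))]
  · refine Finset.sum_congr rfl fun i hi => ?_
    have hi' : i ≤ k := by simpa [Nat.lt_succ_iff] using hi
    simp [lowerCoeff, hi']
  · intro i _ hi
    have hi' : ¬ i ≤ k := by simpa [Nat.lt_succ_iff] using hi
    simp [lowerCoeff, hi']

open Polynomial in
/-- Here the constant term defining `bandEntry` is cleared of denominators by `X ^ (k + l)`. -/
lemma coeff_pair {k l i j : ℕ} (hi : i ≤ k) (hj : j ≤ l) :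
    (((X ^ (k - i) + X ^ (k + i + 1)) * (X ^ (l - j) + X ^ (l + j + 1)) *
      (1 + X) ^ 5 : ℤ[X])).coeff (k + l) = bandEntry i j := by
  obtain ⟨a, rfl⟩ := Nat.exists_eq_add_of_le hi
  obtain ⟨b, rfl⟩ := Nat.exists_eq_add_of_le hj
  have e : ((X ^ (i + a - i) + X ^ (i + a + i + 1)) * (X ^ (j + b - j) + X ^ (j + b + j + 1)) *
      (1 + X) ^ 5 : ℤ[X]) = X ^ (a + b) * (1 + X) ^ 5 + X ^ (a + b + j + j + 1) * (1 + X) ^ 5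
        + X ^ (a + b + i + i + 1) * (1 + X) ^ 5
        + X ^ (a + b + i + i + j + j + 2) * (1 + X) ^ 5 := by
    rw [Nat.add_sub_cancel_left, Nat.add_sub_cancel_left]; ring
  rw [e]
  simp only [coeff_add, coeff_X_pow_mul', coeff_one_add_X_pow]
  rw [if_pos (by omega), if_neg (show ¬ a + b + i + i + j + j + 2 ≤ i + a + (j + b) by omega),
    show i + a + (j + b) - (a + b) = i + j by omega,
    show i + a + (j + b) - (a + b + j + j + 1) = i - j - 1 by omega,
    show i + a + (j + b) - (a + b + i + i + 1) = j - i - 1 by omega]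
  have h1 : (a + b + j + j + 1 ≤ i + a + (j + b)) ↔ j < i := by omega
  have h2 : (a + b + i + i + 1 ≤ i + a + (j + b)) ↔ i < j := by omega
  simp only [h1, h2, bandEntry, add_zero]

open Polynomial in
lemma centralSeq_eq_sum {k l n : ℕ} (hk : k < n) (hl : l < n) :
    centralSeq 7 (k + l) = ∑ i ∈ Finset.range n, ∑ j ∈ Finset.range n,
      lowerCoeff k i * bandEntry i j * lowerCoeff l j := by
  have h : centralSeq 7 (k + l) = ((1 + X : ℤ[X]) ^ (2 * (k + l) + 7)).coeff (k + l) := by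
    rw [coeff_one_add_X_pow]; rfl
  rw [h, show (1 + X : ℤ[X]) ^ (2 * (k + l) + 7) =
    (1 + X) ^ (2 * k + 1) * (1 + X) ^ (2 * l + 1) * (1 + X) ^ 5 by ring,
    one_add_X_pow_odd_range hk, one_add_X_pow_odd_range hl, Finset.sum_mul_sum, Finset.sum_mul,
    finsetSum_coeff]
  refine Finset.sum_congr rfl fun i _ => ?_
  rw [Finset.sum_mul, finsetSum_coeff]
  refine Finset.sum_congr rfl fun j _ => ?_
  by_cases hi : i ≤ k
  · by_cases hj : j ≤ l
    · have e (p q r : ℤ[X]) (a b : ℤ) : C a * p * (C b * q) * r = C (a * b) * (p * q * r) := by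
        rw [C_mul]; ring
      rw [e, coeff_C_mul, coeff_pair hi hj]
      ring
    · simp [lowerCoeff, hj]
  · simp [lowerCoeff, hi]

/-- The leading `n × n` section of the band matrix. -/
def bandMatrix (n : ℕ) : Matrix (Fin n) (Fin n) ℤ := Matrix.of fun i j => bandEntry i j

lemma hankel_eq_det_bandMatrix (n : ℕ) : hankel (centralSeq 7) n = (bandMatrix n).det := by
  set L : Matrix (Fin n) (Fin n) ℤ := Matrix.of fun k i => lowerCoeff k i with hL
  have hdet : L.det = 1 := by
    rw [Matrix.det_of_isLowerTriangular]
    · simp [hL, lowerCoeff]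
    · intro i j hij
      have : ¬ (j : ℕ) ≤ i := not_le.2 hij
      simp only [hL, lowerCoeff, Matrix.of_apply, if_neg this]
  have hmul : (Matrix.of fun i j : Fin n => centralSeq 7 (i.val + j.val)) =
      L * bandMatrix n * L.transpose := by
    ext k l
    simp only [Matrix.of_apply, Matrix.mul_apply, Matrix.transpose_apply, hL, bandMatrix,
      Finset.sum_mul]
    rw [centralSeq_eq_sum k.2 l.2, Finset.sum_comm, Finset.sum_range]
    refine Finset.sum_congr rfl fun j _ => ?_
    rw [Finset.sum_range]
  rw [hankel, hmul, Matrix.det_mul, Matrix.det_mul, Matrix.det_transpose, hdet]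
  ring

/-! ### The kernel of the band matrix -/

/-- The sequence of period 7 equal to `1` at `r`, to `-1` at the reflected residue `6 - r` and to
`0` elsewhere; it is used for `r = 0, 1, 2`. -/
def perSeq (r j : ℕ) : ℤ := if j % 7 = r then 1 else if j % 7 = 6 - r then -1 else 0

/-- The six kernel sequences, with the sign `(-1)^j` removed: extended to `j ∈ ℤ`, they are
odd under `j ↦ -1 - j` and annihilated by `(1 - E)^5 (1 - E^7)`, where `E` is the shift. -/
def solSeq (j : ℕ) : Fin 6 → ℤ :=
  ![perSeq 0 j, perSeq 1 j, perSeq 2 j, 2 * j + 1, (2 * j + 1) ^ 3, (2 * j + 1) ^ 5]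

lemma perSeq_add_seven (r j : ℕ) : perSeq r (j + 7) = perSeq r j := by simp [perSeq]

/-- The recurrence `(1 - E)^5 (1 - E^7) u = 0`. -/
lemma solSeq_rec (k : ℕ) (c : Fin 6) :
    solSeq k c - 5 * solSeq (k + 1) c + 10 * solSeq (k + 2) c - 10 * solSeq (k + 3) c
      + 5 * solSeq (k + 4) c - solSeq (k + 5) c - solSeq (k + 7) c + 5 * solSeq (k + 8) c
      - 10 * solSeq (k + 9) c + 10 * solSeq (k + 10) c - 5 * solSeq (k + 11) c
      + solSeq (k + 12) c = 0 := by
  have h (r j : ℕ) := perSeq_add_seven r j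
  have h0 (r) := h r k
  have h1 (r) := h r (k + 1)
  have h2 (r) := h r (k + 2)
  have h3 (r) := h r (k + 3)
  have h4 (r) := h r (k + 4)
  have h5 (r) := h r (k + 5)
  simp only [add_assoc, Nat.reduceAdd] at h0 h1 h2 h3 h4 h5
  fin_cases c <;> simp [solSeq, h0, h1, h2, h3, h4, h5] <;> ring

lemma bandEntry_eq_zero {i j : ℕ} (h : i + 6 < j) : bandEntry i j = 0 := by
  rw [bandEntry, Nat.choose_eq_zero_of_lt (by omega), if_neg (by omega), if_pos (by omega),
    Nat.choose_eq_zero_of_lt (by omega)]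
  simp

lemma bandEntry_diag (i : ℕ) : bandEntry i (i + 6) = 1 := by
  rw [bandEntry, Nat.choose_eq_zero_of_lt (by omega), if_neg (by omega), if_pos (by omega),
    show i + 6 - i - 1 = 5 by omega]
  simp

lemma bandEntry_sum_aux (i : ℕ) (c : Fin 6) :
    ∑ j ∈ Finset.range (i + 7), bandEntry i j * ((-1) ^ j * solSeq j c) = 0 := by
  rcases lt_or_ge i 6 with hi | hi
  -- The first six rows, where the corner `binom(5, i + j)` contributes, are finitely many.
  · interval_cases i <;> fin_cases c <;> decide
  · obtain ⟨k, rfl⟩ := Nat.exists_eq_add_of_le' hi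
    have hz : ∑ j ∈ Finset.range k, bandEntry (k + 6) j * ((-1) ^ j * solSeq j c) = 0 := by
      refine Finset.sum_eq_zero fun j hj => ?_
      have hj' : j < k := by simpa using hj
      rw [bandEntry, Nat.choose_eq_zero_of_lt (by omega), if_neg (show ¬ k + 6 < j by omega),
        Nat.choose_eq_zero_of_lt (show 5 < k + 6 - j - 1 by omega)]
      simp
    have hch : ∀ t, Nat.choose 5 (k + 6 + (k + t)) = 0 :=
      fun t => Nat.choose_eq_zero_of_lt (by omega)
    have hch0 : Nat.choose 5 (k + 6 + k) = 0 := hch 0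
    have hlow : ∀ t, t < 6 → bandEntry (k + 6) (k + t) = Nat.choose 5 (5 - t) := by
      intro t ht
      rw [bandEntry, hch, if_pos (by omega), if_neg (by omega),
        show k + 6 - (k + t) - 1 = 5 - t by omega]
      simp
    have hmid : bandEntry (k + 6) (k + 6) = 0 := by simp [bandEntry, hch]
    have hhigh : ∀ t, bandEntry (k + 6) (k + (t + 7)) = Nat.choose 5 t := by
      intro t
      rw [bandEntry, hch, if_neg (by omega), if_pos (by omega),
        show k + (t + 7) - (k + 6) - 1 = t by omega]
      simp
    have e0 : bandEntry (k + 6) k = 1 := by simpa using hlow 0 (by norm_num)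
    have e1 := hlow 1 (by norm_num)
    have e2 := hlow 2 (by norm_num)
    have e3 := hlow 3 (by norm_num)
    have e4 := hlow 4 (by norm_num)
    have e5 := hlow 5 (by norm_num)
    have f0 := hhigh 0
    have f1 := hhigh 1
    have f2 := hhigh 2
    have f3 := hhigh 3
    have f4 := hhigh 4
    have f5 := hhigh 5
    norm_num [Nat.choose] at e1 e2 e3 e4 e5 f0 f1 f2 f3 f4 f5
    rw [show k + 6 + 7 = k + 13 by ring]
    simp only [Finset.sum_range_succ, hz, e0, e1, e2, e3, e4, e5, hmid, f0, f1, f2, f3, f4, f5]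
    linear_combination (-1) ^ k * solSeq_rec k c

/-- Row `i` of the band matrix annihilates the kernel sequences.  It ends at column `i + 6`, so
cutting off after `n + 6` columns loses nothing when `i < n`. -/
lemma bandEntry_sum {i n : ℕ} (hi : i < n) (c : Fin 6) :
    ∑ j ∈ Finset.range (n + 6), bandEntry i j * ((-1) ^ j * solSeq j c) = 0 := by
  rw [← bandEntry_sum_aux i c]
  symm
  refine Finset.sum_subset (Finset.range_subset_range.2 (by omega)) fun j _ hj => ?_
  have hj' : i + 7 ≤ j := by simpa using hj
  rw [bandEntry_eq_zero (by omega), zero_mul]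

/-- The Casorati matrix of the six kernel sequences at position `n`. -/
def casorati (n : ℕ) : Matrix (Fin 6) (Fin 6) ℤ := Matrix.of fun t c => solSeq (n + t) c

/-- Restoring the signs `(-1)^j` multiplies the Casorati determinant by
`(-1)^(6n + 0 + 1 + ⋯ + 5) = -1`. -/
lemma det_signed_casorati (n : ℕ) :
    (Matrix.of fun t c : Fin 6 => (-1) ^ (n + t : ℕ) * solSeq (n + t) c).det
      = -(casorati n).det := by
  have := Matrix.det_mul_column (fun t : Fin 6 => (-1 : ℤ) ^ (n + t : ℕ)) (casorati n)
  simp only [casorati, Matrix.of_apply] at this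
  rw [this]
  have h : ∏ t : Fin 6, (-1 : ℤ) ^ (n + t : ℕ) = -1 := by
    rw [Finset.prod_pow_eq_pow_sum]
    apply Odd.neg_one_pow
    simp only [Fin.sum_univ_six]
    simp
    exact ⟨3 * n + 7, by ring⟩
  rw [h, casorati]
  ring

/-! ### From the band matrix to a Casorati determinant -/

lemma sign_finRotate_pow_six (n : ℕ) : Equiv.Perm.sign ((finRotate (n + 6)) ^ 6) = 1 := by
  rw [map_pow, sign_finRotate, ← pow_mul, Even.neg_one_pow ((by decide : Even 6).mul_left _)]

/-- Rotating by six places moves the first `n` indices to the last `n` places. -/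
lemma finRotate_pow_six_val (n : ℕ) (r : Fin (n + 6)) :
    (((finRotate (n + 6)) ^ 6) r).val = (r.val + 6) % (n + 6) := by
  have h (i : Fin (n + 6)) : (finRotate (n + 6) i).val = (i.val + 1) % (n + 6) := by
    rw [show finRotate (n + 6) i = i + 1 from finRotate_apply i, Fin.val_add]
    simp
  simp only [pow_succ, pow_zero, one_mul, Equiv.Perm.mul_apply, h]
  simp only [Nat.mod_add_mod]

/-- The determinant of a banded section is the ratio of two Casorati determinants of a basis of
the kernel of the band operator: compute the determinant of the product `M * Q` below in two
ways. -/
lemma det_bandMatrix_mul (n : ℕ) :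
    (bandMatrix n).det * (casorati 0).det = (casorati n).det := by
  set w : ℕ → Fin 6 → ℤ := fun j c => (-1) ^ j * solSeq j c with hw
  -- `M'` and `M` both consist of the first `n` band rows and the last six unit rows; in `M'` the
  -- unit rows come last, which makes the determinant visible, and in `M` they come first, which
  -- makes `M * Q` block triangular.
  set M' : Matrix (Fin (n + 6)) (Fin (n + 6)) ℤ := Matrix.of fun r c =>
    if r.val < n then bandEntry r c else if r = c then 1 else 0 with hM'
  set M : Matrix (Fin (n + 6)) (Fin (n + 6)) ℤ := Matrix.of fun r c =>
    if r.val < 6 then (if n + r.val = c.val then 1 else 0) else bandEntry (r - 6) c with hM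
  -- The columns of `Q` are the six kernel sequences, then the unit vectors `e_6, ..., e_{n+5}`.
  set Q : Matrix (Fin (n + 6)) (Fin (n + 6)) ℤ := Matrix.of fun r c =>
    if h : c.val < 6 then w r ⟨c.val, h⟩ else if r = c then 1 else 0 with hQ
  have hMM' : M'.det = M.det := by
    have h := Matrix.det_permute ((finRotate (n + 6)) ^ 6) M
    rw [sign_finRotate_pow_six, Units.val_one, Int.cast_one, one_mul] at h
    rw [← h]
    refine congrArg Matrix.det (Matrix.ext fun r c => ?_)
    simp only [hM', hM, Matrix.submatrix_apply, Matrix.of_apply, id, finRotate_pow_six_val]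
    by_cases hr : r.val < n
    · rw [Nat.mod_eq_of_lt (by omega), if_pos hr, if_neg (by omega), Nat.add_sub_cancel]
    · have hr2 := r.2
      rw [show r.val + 6 = (r.val - n) + (n + 6) by omega, Nat.add_mod_right,
        Nat.mod_eq_of_lt (by omega), if_neg hr, if_pos (show r.val - n < 6 by omega),
        show n + (r.val - n) = r.val by omega]
      simp [Fin.ext_iff]
  have hM'det : M'.det = (bandMatrix n).det := by
    rw [← Matrix.det_reindex_self finSumFinEquiv.symm M', ← Matrix.fromBlocks_toBlocks
      (Matrix.reindex finSumFinEquiv.symm finSumFinEquiv.symm M')]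
    have h1 : (Matrix.reindex finSumFinEquiv.symm finSumFinEquiv.symm M').toBlocks₁₁
        = bandMatrix n := by
      ext i j; simp [Matrix.toBlocks₁₁, hM', bandMatrix]
    have h2 : (Matrix.reindex finSumFinEquiv.symm finSumFinEquiv.symm M').toBlocks₂₁ = 0 := by
      ext i j
      have := j.2
      simp [Matrix.toBlocks₂₁, hM', Fin.ext_iff]
      omega
    have h3 : (Matrix.reindex finSumFinEquiv.symm finSumFinEquiv.symm M').toBlocks₂₂ = 1 := by
      ext i j
      simp [Matrix.toBlocks₂₂, hM', Matrix.one_apply]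
    rw [h1, h2, h3, Matrix.det_fromBlocks_zero₂₁, Matrix.det_one, mul_one]
  set e : Fin 6 ⊕ Fin n ≃ Fin (n + 6) := finSumFinEquiv.trans (finCongr (add_comm 6 n)) with he
  have hel (i : Fin 6) : (e (Sum.inl i)).val = i.val := by simp [he]
  have her (i : Fin n) : (e (Sum.inr i)).val = 6 + i.val := by
    simp [he]; omega
  have hQdet : Q.det = -(casorati 0).det := by
    rw [← Matrix.det_reindex_self e.symm Q, ← Matrix.fromBlocks_toBlocks
      (Matrix.reindex e.symm e.symm Q)]
    have h1 : (Matrix.reindex e.symm e.symm Q).toBlocks₁₁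
        = Matrix.of fun t c : Fin 6 => (-1) ^ (0 + t : ℕ) * solSeq (0 + t) c := by
      ext i j; simp [Matrix.toBlocks₁₁, hQ, hel, hw]
    have h2 : (Matrix.reindex e.symm e.symm Q).toBlocks₁₂ = 0 := by
      ext i j
      have := i.2
      simp [Matrix.toBlocks₁₂, hQ, her]
    have h3 : (Matrix.reindex e.symm e.symm Q).toBlocks₂₂ = 1 := by
      ext i j
      simp [Matrix.toBlocks₂₂, hQ, her, Matrix.one_apply]
    rw [h1, h2, h3, Matrix.det_fromBlocks_zero₁₂, Matrix.det_one, mul_one, det_signed_casorati]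
  have hMQ : (M * Q).det = -(casorati n).det := by
    have hrow (i : Fin 6) (c : Fin (n + 6)) : (M * Q) (e (Sum.inl i)) c
        = Q ⟨n + i.val, by omega⟩ c := by
      rw [Matrix.mul_apply, Finset.sum_eq_single ⟨n + i.val, by omega⟩]
      · simp [hM, hel]
      · intro b _ hb
        have : ¬ n + i.val = b.val := fun h => hb (Fin.ext h.symm)
        simp [hM, hel, this]
      · simp
    have hcol (r : Fin (n + 6)) (j : Fin n) : (M * Q) r (e (Sum.inr j))
        = M r (e (Sum.inr j)) := by
      rw [Matrix.mul_apply, Finset.sum_eq_single (e (Sum.inr j))]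
      · simp [hQ, her]
      · intro b _ hb
        simp [hQ, her, hb]
      · simp
    rw [← Matrix.det_reindex_self e.symm (M * Q), ← Matrix.fromBlocks_toBlocks
      (Matrix.reindex e.symm e.symm (M * Q))]
    have h1 : (Matrix.reindex e.symm e.symm (M * Q)).toBlocks₁₁
        = Matrix.of fun t c : Fin 6 => (-1) ^ (n + t : ℕ) * solSeq (n + t) c := by
      ext i j
      simp only [Matrix.toBlocks₁₁, Matrix.reindex_apply, Equiv.symm_symm, Matrix.of_apply,
        Matrix.submatrix_apply]
      rw [hrow]
      simp [hQ, hel, hw]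
    have h2 : (Matrix.reindex e.symm e.symm (M * Q)).toBlocks₂₁ = 0 := by
      ext i j
      simp only [Matrix.toBlocks₂₁, Matrix.reindex_apply, Equiv.symm_symm, Matrix.of_apply,
        Matrix.submatrix_apply, Matrix.zero_apply]
      rw [Matrix.mul_apply, ← bandEntry_sum i.2 j, Finset.sum_range]
      refine Finset.sum_congr rfl fun k _ => ?_
      simp [hM, hQ, hel, her, hw]
    have h3 : ((Matrix.reindex e.symm e.symm (M * Q)).toBlocks₂₂).det = 1 := by
      have h4 (i j : Fin n) : (Matrix.reindex e.symm e.symm (M * Q)).toBlocks₂₂ i j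
          = bandEntry i (j + 6) := by
        simp only [Matrix.toBlocks₂₂, Matrix.reindex_apply, Equiv.symm_symm, Matrix.of_apply,
          Matrix.submatrix_apply]
        rw [hcol]
        simp [hM, her, add_comm]
      rw [Matrix.det_of_isLowerTriangular]
      · exact Finset.prod_eq_one fun i _ => by rw [h4, bandEntry_diag]
      · intro i j hij
        have hij' : (i : ℕ) < j := hij
        rw [h4, bandEntry_eq_zero (by omega)]
    rw [h2, Matrix.det_fromBlocks_zero₂₁, h1, h3, mul_one, det_signed_casorati]
  rw [Matrix.det_mul, hQdet, ← hMM', hM'det] at hMQ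
  linarith

lemma casorati_zero_det : (casorati 0).det = 15805440 := by
  simp [casorati, solSeq, perSeq, Matrix.det_succ_row_zero, Fin.sum_univ_succ, Fin.succAbove]

/-- The periodic components depend on the residue class modulo 7 only. -/
lemma solSeq_seven_mul_add (m s : ℕ) : solSeq (7 * m + s) =
    ![perSeq 0 s, perSeq 1 s, perSeq 2 s, 2 * (7 * m + s) + 1,
      (2 * (7 * m + s) + 1) ^ 3, (2 * (7 * m + s) + 1) ^ 5] := by
  have hm : (7 * m + s) % 7 = s % 7 := by omega
  simp [solSeq, perSeq, hm]

/-! ### Evaluation of the Casorati determinants in each residue class modulo 7 -/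

lemma casorati_det_0 (m : ℕ) : (casorati (7 * m)).det =
    15805440 * (2 * (m : ℤ) + 1) ^ 3 := by
  simp only [casorati, solSeq_seven_mul_add]
  simp [perSeq, Matrix.det_succ_row_zero, Fin.sum_univ_succ, Fin.succAbove]
  ring

lemma casorati_det_1 (m : ℕ) : (casorati (7 * m + 1)).det =
    15805440 * (2 * (m : ℤ) + 1) ^ 3 := by
  simp only [casorati, add_assoc, solSeq_seven_mul_add]
  simp [perSeq, Matrix.det_succ_row_zero, Fin.sum_univ_succ, Fin.succAbove]
  ring

lemma casorati_det_2 (m : ℕ) : (casorati (7 * m + 2)).det =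
    175616 * ((m + 1) * (9604 * (m : ℤ) ^ 3 + 9604 * (m : ℤ) ^ 2 - 1323 * m - 2340) *
        (2 * m + 1) ^ 2) := by
  simp only [casorati, add_assoc, solSeq_seven_mul_add]
  simp [perSeq, Matrix.det_succ_row_zero, Fin.sum_univ_succ, Fin.succAbove]
  ring

lemma casorati_det_3 (m : ℕ) : (casorati (7 * m + 3)).det =
    -(351232 * ((19208 * (m : ℤ) ^ 3 + 67228 * (m : ℤ) ^ 2 + 70854 * m + 23445) *
        (m + 1) ^ 2 * (2 * m + 1))) := by
  simp only [casorati, add_assoc, solSeq_seven_mul_add]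
  simp [perSeq, Matrix.det_succ_row_zero, Fin.sum_univ_succ, Fin.succAbove]
  ring

lemma casorati_det_4 (m : ℕ) : (casorati (7 * m + 4)).det =
    15805440 * (64 * ((m : ℤ) + 1) ^ 3) := by
  simp only [casorati, add_assoc, solSeq_seven_mul_add]
  simp [perSeq, Matrix.det_succ_row_zero, Fin.sum_univ_succ, Fin.succAbove]
  ring

lemma casorati_det_5 (m : ℕ) : (casorati (7 * m + 5)).det =
    351232 * ((m + 1) ^ 2 *
        (38416 * (m : ℤ) ^ 4 + 153664 * (m : ℤ) ^ 3 + 208936 * (m : ℤ) ^ 2 +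
          103344 * m + 9045)) := by
  simp only [casorati, add_assoc, solSeq_seven_mul_add]
  simp [perSeq, Matrix.det_succ_row_zero, Fin.sum_univ_succ, Fin.succAbove]
  ring

lemma casorati_det_6 (m : ℕ) : (casorati (7 * m + 6)).det =
    -(175616 * ((9604 * (m : ℤ) ^ 3 + 48020 * (m : ℤ) ^ 2 + 75509 * m + 38110) *
        (2 * m + 3) ^ 2 * (m + 1))) := by
  simp only [casorati, add_assoc, solSeq_seven_mul_add]
  simp [perSeq, Matrix.det_succ_row_zero, Fin.sum_univ_succ, Fin.succAbove]
  ring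

theorem hankel_centralSeq_seven (n : ℕ) :
    (hankel (centralSeq 7) (7 * n) : ℚ) = (2 * n + 1) ^ 3 ∧
    (hankel (centralSeq 7) (7 * n + 1) : ℚ) = (2 * n + 1) ^ 3 ∧
    (hankel (centralSeq 7) (7 * n + 2) : ℚ) =
      1 / 90 * (n + 1) * (9604 * (n : ℚ) ^ 3 + 9604 * (n : ℚ) ^ 2 - 1323 * n - 2340) *
        (2 * n + 1) ^ 2 ∧
    (hankel (centralSeq 7) (7 * n + 3) : ℚ) =
      -(1 / 45) * (19208 * (n : ℚ) ^ 3 + 67228 * (n : ℚ) ^ 2 + 70854 * n + 23445) *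
        (n + 1) ^ 2 * (2 * n + 1) ∧
    (hankel (centralSeq 7) (7 * n + 4) : ℚ) = 64 * (n + 1) ^ 3 ∧
    (hankel (centralSeq 7) (7 * n + 5) : ℚ) =
      1 / 45 * (n + 1) ^ 2 *
        (38416 * (n : ℚ) ^ 4 + 153664 * (n : ℚ) ^ 3 + 208936 * (n : ℚ) ^ 2 +
          103344 * n + 9045) ∧
    (hankel (centralSeq 7) (7 * n + 6) : ℚ) =
      -(1 / 90) * (9604 * (n : ℚ) ^ 3 + 48020 * (n : ℚ) ^ 2 + 75509 * n + 38110) *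
        (2 * n + 3) ^ 2 * (n + 1) := by
  have h (k : ℕ) : (hankel (centralSeq 7) k : ℚ) * 15805440 = ((casorati k).det : ℚ) := by
    rw [hankel_eq_det_bandMatrix, ← det_bandMatrix_mul, casorati_zero_det]
    push_cast
    rfl
  have h0 := h (7 * n)
  have h1 := h (7 * n + 1)
  have h2 := h (7 * n + 2)
  have h3 := h (7 * n + 3)
  have h4 := h (7 * n + 4)
  have h5 := h (7 * n + 5)
  have h6 := h (7 * n + 6)
  rw [casorati_det_0] at h0
  rw [casorati_det_1] at h1
  rw [casorati_det_2] at h2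
  rw [casorati_det_3] at h3
  rw [casorati_det_4] at h4
  rw [casorati_det_5] at h5
  rw [casorati_det_6] at h6
  push_cast at h0 h1 h2 h3 h4 h5 h6
  refine ⟨?_, ?_, ?_, ?_, ?_, ?_, ?_⟩
  · linear_combination h0 / 15805440
  · linear_combination h1 / 15805440
  · linear_combination h2 / 15805440
  · linear_combination h3 / 15805440
  · linear_combination h4 / 15805440
  · linear_combination h5 / 15805440
  · linear_combination h6 / 15805440
end

section
/- For every natural number t, the polynomial identity (y+1)^{2t+1} + 1 = −∑_{i=0}^{t} binom(2t−i, i)·(1+y)^i·y^{2t+1−2i} + 2·∑_{i=0}^{t} binom(2t−i, i)·(1+y)^{i+1}·y^{2t−2i} holds in the polynomial ring ℤ[y]. -/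
/-!
Both sums on the right are multiples of `S = ∑ i, binom(2t - i, i) (1+y)^i y^(2t-2i)`: the right-hand
side is `-y S + 2 (1+y) S = (y + 2) S`. The sums `U n = ∑ i, binom(n - i, i) (1+y)^i y^(n-2i)` satisfy
the Lucas recurrence `U (n+2) = y U (n+1) + (1+y) U n`, by Pascal's rule. Its characteristic polynomial
`λ² - y λ - (1+y)` has the roots `1+y` and `-1`, which gives
`(y + 2) U n = (1+y)^(n+1) - (-1)^(n+1)`; the claim is the case `n = 2t`.
-/

open Polynomial

/-- The Lucas polynomial `∑ i, binom(n - i, i) (1+X)^i X^(n-2i)`. The binomial coefficient vanishes for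
`n < 2 i`, so the terms in which the exponent `n - 2 * i` is truncated do not contribute. -/
noncomputable def lucasSum (n : ℕ) : ℤ[X] :=
  ∑ i ∈ Finset.range (n + 1), C (((n - i).choose i : ℤ)) * (1 + X) ^ i * X ^ (n - 2 * i)

theorem lucasSum_add_two (n : ℕ) :
    lucasSum (n + 2) = X * lucasSum (n + 1) + (1 + X) * lucasSum n := by
  unfold lucasSum
  rw [Finset.sum_range_succ _ (n + 2), Finset.sum_range_succ' _ (n + 1),
    Finset.sum_range_succ' _ (n + 1)]
  -- Terms `i = j + 1` are matched for `j ≤ n`; the term `i = n + 2` on the left is zero.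
  have key : ∀ j ∈ Finset.range (n + 1),
      C (((n + 2 - (j + 1)).choose (j + 1) : ℤ)) * (1 + X) ^ (j + 1) * X ^ (n + 2 - 2 * (j + 1)) =
        X * (C (((n + 1 - (j + 1)).choose (j + 1) : ℤ)) * (1 + X) ^ (j + 1) *
          X ^ (n + 1 - 2 * (j + 1))) +
        (1 + X) * (C (((n - j).choose j : ℤ)) * (1 + X) ^ j * X ^ (n - 2 * j) : ℤ[X]) := by
    intro j hj
    have hj' : j ≤ n := Nat.lt_succ_iff.mp (Finset.mem_range.mp hj)
    have e1 : n + 2 - (j + 1) = (n - j) + 1 := by omega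
    have e2 : n + 1 - (j + 1) = n - j := by omega
    have e3 : n + 2 - 2 * (j + 1) = n - 2 * j := by omega
    rw [e1, e2, e3, Nat.choose_succ_succ']
    by_cases h : 2 * j + 1 ≤ n
    · have e4 : n - 2 * j = (n + 1 - 2 * (j + 1)) + 1 := by omega
      rw [e4]
      push_cast
      simp only [C_add]
      ring
    · rw [Nat.choose_eq_zero_of_lt (show n - j < j + 1 by omega)]
      simp only [add_zero, Nat.cast_zero, C_0]
      ring
  rw [Finset.sum_congr rfl key, Finset.sum_add_distrib, ← Finset.mul_sum, ← Finset.mul_sum,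
    Nat.choose_eq_zero_of_lt (show n + 2 - (n + 2) < n + 2 by omega)]
  simp only [Nat.cast_zero, C_0, Nat.choose_zero_right, Nat.cast_one, C_1, mul_zero, Nat.sub_zero,
    pow_zero]
  ring

/-- Closed form of the Lucas polynomials, from the characteristic roots `1 + X` and `-1`. -/
theorem add_two_mul_lucasSum (n : ℕ) :
    (X + 2) * lucasSum n = (1 + X) ^ (n + 1) - (-1) ^ (n + 1) := by
  induction n using Nat.twoStepInduction with
  | zero => simp [lucasSum]; ring
  | one => simp [lucasSum, Finset.sum_range_succ]; ring
  | more n h0 h1 =>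
    rw [lucasSum_add_two]
    linear_combination X * h1 + (1 + X) * h0

theorem lucasSum_two_mul (t : ℕ) :
    lucasSum (2 * t) = ∑ i ∈ Finset.range (t + 1),
      C (((2 * t - i).choose i : ℤ)) * (1 + X) ^ i * X ^ (2 * t - 2 * i) := by
  symm
  refine Finset.sum_subset (Finset.range_mono (by omega)) fun i _ hi => ?_
  rw [Finset.mem_range] at hi
  rw [Nat.choose_eq_zero_of_lt (show 2 * t - i < i by omega)]
  simp

theorem poly_identity_G_odd (t : ℕ) :
    ((X + 1 : ℤ[X]) ^ (2 * t + 1) + 1) =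
      -∑ i ∈ Finset.range (t + 1),
          C (((2 * t - i).choose i : ℤ)) * (1 + X) ^ i * X ^ (2 * t + 1 - 2 * i) +
        2 * ∑ i ∈ Finset.range (t + 1),
          C (((2 * t - i).choose i : ℤ)) * (1 + X) ^ (i + 1) * X ^ (2 * t - 2 * i) := by
  have h1 : ∑ i ∈ Finset.range (t + 1),
      C (((2 * t - i).choose i : ℤ)) * (1 + X) ^ i * X ^ (2 * t + 1 - 2 * i) =
        X * lucasSum (2 * t) := by
    rw [lucasSum_two_mul, Finset.mul_sum]
    refine Finset.sum_congr rfl fun i hi => ?_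
    rw [Finset.mem_range] at hi
    rw [show 2 * t + 1 - 2 * i = (2 * t - 2 * i) + 1 by omega]
    ring
  have h2 : ∑ i ∈ Finset.range (t + 1),
      C (((2 * t - i).choose i : ℤ)) * (1 + X) ^ (i + 1) * X ^ (2 * t - 2 * i) =
        (1 + X) * lucasSum (2 * t) := by
    rw [lucasSum_two_mul, Finset.mul_sum]
    exact Finset.sum_congr rfl fun i _ => by ring
  have h := add_two_mul_lucasSum (2 * t)
  rw [(odd_two_mul_add_one t).neg_one_pow] at h
  rw [h1, h2, add_comm X 1]
  linear_combination -h
end
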